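/- arXiv:1902.05106 — 5 statements merged into one kernel-verified Lean document; each statement's English description precedes it below -/
import Mathlib

section
/- Let p ≥ 1, let Ω and Ψ be real symmetric positive definite p×p matrices, and let b ∈ ℝ^p satisfy b_j = 0 for some index j. Then the integral defining the (unnormalized) structured product normal marginal prior density at b, namely ∫_{ℝ^p} (∏_{i=1}^{p} 1/|s_i|)·exp( −(1/2)·( Σ_{i,k} (Ω^{−1})_{ik}·(b_i/s_i)·(b_k/s_k) + sᵀ Ψ^{−1} s ) ) ds, equals +∞. (This is Proposition: for the SPN prior, if b_j = 0 for any j ∈ {1,…,p}, then p(b | Ψ, Ω) = +∞.) -/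
open MeasureTheory Real
open scoped ENNReal Topology

/-!
Fix `s₀` with `s₀ j = 0` and all other coordinates nonzero. As `b j = 0`, the quotient `b / s` has
coordinate `j` identically zero, so it is continuous at `s₀`, and so is every factor of the
integrand except `|s j|⁻¹`. Hence the integrand is at least `c * |s j|⁻¹` near `s₀` for some
`c > 0`, and `|s j|⁻¹` has infinite integral over every box around `s₀`.
-/

theorem setLIntegral_enorm_inv_eq_top_of_mem_nhds_zero {U : Set ℝ} (hU : U ∈ 𝓝 0) :
    ∫⁻ x in U, ‖x⁻¹‖ₑ = ⊤ := by
  obtain ⟨ε, hε, hεU⟩ := Metric.mem_nhds_iff.1 hU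
  refine eq_top_mono (lintegral_mono_set hεU) ?_
  by_contra hfinite
  have hint : IntegrableOn (fun x : ℝ ↦ x⁻¹) (Set.Ioo (-ε) ε) :=
    ⟨measurable_inv.aestronglyMeasurable, by
      simpa [hasFiniteIntegral_iff_enorm, lt_top_iff_ne_top, Real.ball_eq_Ioo] using hfinite⟩
  rw [← intervalIntegrable_iff_integrableOn_Ioo_of_le (by linarith),
    intervalIntegrable_inv_iff] at hint
  rcases hint with heq | hmem
  · linarith
  · exact hmem (Set.mem_uIcc_of_le (by linarith) hε.le)

theorem setLIntegral_univ_pi_eval {ι : Type*} [Fintype ι] [DecidableEq ι] {X : ι → Type*}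
    [∀ i, MeasurableSpace (X i)] (μ : ∀ i, Measure (X i)) [∀ i, SigmaFinite (μ i)]
    (S : ∀ i, Set (X i)) {j : ι} {f : X j → ℝ≥0∞} (hf : Measurable f) :
    ∫⁻ x in Set.univ.pi S, f (x j) ∂Measure.pi μ =
      (∏ i ∈ Finset.univ.erase j, μ i (S i)) * ∫⁻ y in S j, f y ∂μ j := by
  rw [Measure.restrict_pi_pi, ← lintegral_map (g := Function.eval j) hf (measurable_pi_apply j),
    Measure.pi_map_eval, lintegral_smul_measure]
  simp only [Measure.restrict_apply_univ, smul_eq_mul]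

theorem setLIntegral_enorm_inv_eval_eq_top_of_mem_nhds {ι : Type*} [Fintype ι] {x₀ : ι → ℝ}
    {j : ι} (hx₀ : x₀ j = 0) {U : Set (ι → ℝ)} (hU : U ∈ 𝓝 x₀) :
    ∫⁻ x in U, ‖(x j)⁻¹‖ₑ = ⊤ := by
  classical
  obtain ⟨ε, hε, hεU⟩ := Metric.mem_nhds_iff.1 hU
  refine eq_top_mono (lintegral_mono_set hεU) ?_
  have hj : ∫⁻ y in Metric.ball (x₀ j) ε, ‖y⁻¹‖ₑ = ⊤ :=
    setLIntegral_enorm_inv_eq_top_of_mem_nhds_zero (hx₀ ▸ Metric.ball_mem_nhds _ hε)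
  have hne : ∏ i ∈ Finset.univ.erase j, volume (Metric.ball (x₀ i) ε) ≠ 0 :=
    Finset.prod_ne_zero_iff.2 fun i _ ↦ (Metric.measure_ball_pos volume (x₀ i) hε).ne'
  calc ∫⁻ x in Metric.ball x₀ ε, ‖(x j)⁻¹‖ₑ
      = (∏ i ∈ Finset.univ.erase j, volume (Metric.ball (x₀ i) ε)) *
          ∫⁻ y in Metric.ball (x₀ j) ε, ‖y⁻¹‖ₑ := by
        rw [ball_pi x₀ hε]
        exact setLIntegral_univ_pi_eval (X := fun _ ↦ ℝ) (fun _ ↦ volume) _ measurable_inv.enorm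
    _ = ⊤ := by rw [hj, ENNReal.mul_top hne]

theorem lintegral_mul_eq_top_of_lowerSemicontinuousAt {X : Type*} [TopologicalSpace X]
    [MeasurableSpace X] [OpensMeasurableSpace X] {μ : Measure X} {f w : X → ℝ≥0∞} {x₀ : X}
    (hf : ∀ U ∈ 𝓝 x₀, ∫⁻ x in U, f x ∂μ = ⊤) (hw : LowerSemicontinuousAt w x₀)
    (hpos : 0 < w x₀) : ∫⁻ x, f x * w x ∂μ = ⊤ := by
  obtain ⟨c, hc, hcw⟩ := exists_between hpos
  obtain ⟨U, hUw, hUopen, hxU⟩ := eventually_nhds_iff.1 (hw c hcw)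
  refine top_le_iff.1 ?_
  calc
    ⊤ = c * ∫⁻ x in U, f x ∂μ := by
        rw [hf U (hUopen.mem_nhds hxU), ENNReal.mul_top hc.ne']
    _ ≤ ∫⁻ x in U, c * f x ∂μ := lintegral_const_mul_le c f
    _ ≤ ∫⁻ x in U, f x * w x ∂μ := setLIntegral_mono' hUopen.measurableSet fun x hx ↦ by
        rw [mul_comm]
        gcongr
        exact (hUw x hx).le
    _ ≤ ∫⁻ x, f x * w x ∂μ := setLIntegral_le_lintegral U _

theorem continuousAt_div_of_eq_zero_or_ne_zero {ι G₀ : Type*} [GroupWithZero G₀]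
    [TopologicalSpace G₀] [ContinuousInv₀ G₀] [ContinuousMul G₀] {b s₀ : ι → G₀}
    (h : ∀ i, b i = 0 ∨ s₀ i ≠ 0) : ContinuousAt (fun s : ι → G₀ ↦ b / s) s₀ := by
  refine continuousAt_pi.2 fun i ↦ ?_
  rcases h i with hb | hs
  · simpa only [Pi.div_apply, hb, zero_div] using continuousAt_const
  · exact continuousAt_const.div (continuousAt_apply i s₀) hs

/-- The joint density `f` of `(z, s)` replaces the product of two Gaussian densities. -/
theorem spn_density_pole_general {ι : Type*} [Fintype ι] {f : (ι → ℝ) × (ι → ℝ) → ℝ}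
    (hf : Continuous f) (hpos : ∀ x, 0 < f x) {b : ι → ℝ} {j : ι} (hbj : b j = 0) :
    ∫⁻ s : ι → ℝ, ENNReal.ofReal ((∏ i, 1 / |s i|) * f (b / s, s)) = ⊤ := by
  classical
  let s₀ : ι → ℝ := Function.update 1 j 0
  have hs₀ : ∀ i ≠ j, s₀ i ≠ 0 := fun i hi ↦ by simp [s₀, hi]
  let w : (ι → ℝ) → ℝ := fun s ↦ (∏ i ∈ Finset.univ.erase j, 1 / |s i|) * f (b / s, s)
  have hsplit (s : ι → ℝ) : ENNReal.ofReal ((∏ i, 1 / |s i|) * f (b / s, s)) =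
      ‖(s j)⁻¹‖ₑ * ENNReal.ofReal (w s) := by
    rw [← Finset.mul_prod_erase _ _ (Finset.mem_univ j), mul_assoc,
      ENNReal.ofReal_mul (by positivity), one_div, ← abs_inv, Real.enorm_eq_ofReal_abs]
  have hprod : ContinuousAt (fun s : ι → ℝ ↦ ∏ i ∈ Finset.univ.erase j, 1 / |s i|) s₀ :=
    tendsto_finsetProd _ fun i hi ↦ continuousAt_const.div (continuousAt_apply i s₀).abs
      (abs_ne_zero.2 (hs₀ i (Finset.ne_of_mem_erase hi)))
  have hdiv : ContinuousAt (fun s ↦ b / s) s₀ :=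
    continuousAt_div_of_eq_zero_or_ne_zero fun i ↦
      (eq_or_ne i j).imp (by rintro rfl; exact hbj) (hs₀ i)
  have hw : ContinuousAt w s₀ := hprod.mul (hf.continuousAt.comp (hdiv.prodMk continuousAt_id))
  have hw₀ : 0 < w s₀ := mul_pos (Finset.prod_pos fun i hi ↦
    one_div_pos.2 (abs_pos.2 (hs₀ i (Finset.ne_of_mem_erase hi)))) (hpos _)
  simp only [hsplit]
  exact lintegral_mul_eq_top_of_lowerSemicontinuousAt
    (fun U hU ↦ setLIntegral_enorm_inv_eval_eq_top_of_mem_nhds (by simp [s₀]) hU)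
    (ENNReal.continuous_ofReal.continuousAt.comp hw).lowerSemicontinuousAt
    (ENNReal.ofReal_pos.2 hw₀)

/-- Proposition: for the SPN prior, if `b j = 0` for some `j`, then the (unnormalized)
marginal prior density integral at `b` equals `+∞`. -/
theorem spn_density_pole (p : ℕ) (hp : 1 ≤ p) (Ω Ψ : Matrix (Fin p) (Fin p) ℝ)
    (hΩsymm : Ω.IsSymm) (hΩ : Ω.PosDef) (hΨsymm : Ψ.IsSymm) (hΨ : Ψ.PosDef)
    (b : Fin p → ℝ) (j : Fin p) (hbj : b j = 0) :
    ∫⁻ s : Fin p → ℝ, ENNReal.ofReal ((∏ i, 1 / |s i|) *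
      Real.exp (-(1 / 2) * ((∑ i, ∑ k, Ω⁻¹ i k * (b i / s i) * (b k / s k)) +
        ∑ i, ∑ k, s i * Ψ⁻¹ i k * s k))) = ⊤ :=
  spn_density_pole_general (f := fun (z, s) ↦ Real.exp (-(1 / 2) *
    ((∑ i, ∑ k, Ω⁻¹ i k * z i * z k) + ∑ i, ∑ k, s i * Ψ⁻¹ i k * s k)))
    (by fun_prop) (fun _ ↦ Real.exp_pos _) hbj
end

section
/- Let p ≥ 1, let Ω be a real symmetric positive definite p×p matrix, let 0 < c < 1/2, and let b ∈ ℝ^p satisfy b_j = 0 for some index j. Then the integral defining the (unnormalized) structured normal-gamma marginal prior density at b, namely ∫_{(0,∞)^p} (∏_{i=1}^{p} s_i^{2c − 2})·exp( −(1/2)·Σ_{i,k} (Ω^{−1})_{ik}·(b_i/s_i)·(b_k/s_k) − c·Σ_{i=1}^{p} s_i² ) ds, equals +∞. (This is Proposition: for the SNG prior, if c < 1/2 and b_j = 0 for any j ∈ {1,…,p}, then p(b | c, Ω) = +∞.) -/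
open MeasureTheory Real

/-!
Let `s j` tend to `0` from the right while every other `s i` tends to `1`. Since `b j = 0`, the
quotients `b i / s i` all converge, so the integrand is `s j ^ (2 * c - 2)` times a factor with a
positive limit. As `2 * c - 2 ≤ -1`, the integral over `s j` already diverges at `0`, and the
remaining coordinates contribute a set of positive measure.
-/

open Filter Set Topology
open scoped ENNReal

/-- The lower Lebesgue integral of `φ` is infinite over every set of the filter `l`. This is the
counterpart of `IntegrableAtFilter` expressing a non-integrable singularity of `φ` along `l`. -/
def LIntegralDivergesAtFilter {α : Type*} [MeasurableSpace α] (φ : α → ℝ≥0∞) (l : Filter α)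
    (μ : Measure α) : Prop :=
  ∀ V ∈ l, ∫⁻ x in V, φ x ∂μ = ⊤

namespace LIntegralDivergesAtFilter

section Comparison

variable {α : Type*} [MeasurableSpace α] {l : Filter α} {μ : Measure α}

theorem mono_const_mul {φ ψ : α → ℝ≥0∞} {C : ℝ≥0∞} (h : LIntegralDivergesAtFilter φ l μ)
    (hψ : AEMeasurable ψ μ) (hC : C ≠ 0) (hle : ∀ᶠ x in l, C * φ x ≤ ψ x) :
    LIntegralDivergesAtFilter ψ l μ := by
  intro V hV
  set W := V ∩ {x | C * φ x ≤ ψ x}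
  have hW : W ∈ l := inter_mem hV hle
  refine top_le_iff.1 ?_
  calc
    ⊤ = C * ∫⁻ x in W, φ x ∂μ := by rw [h W hW, ENNReal.mul_top hC]
    _ ≤ ∫⁻ x in W, C * φ x ∂μ := lintegral_const_mul_le C φ
    _ ≤ ∫⁻ x in W, ψ x ∂μ :=
      setLIntegral_mono_ae hψ.restrict (ae_of_all _ fun _ hx => hx.2)
    _ ≤ ∫⁻ x in V, ψ x ∂μ := lintegral_mono_set inter_subset_left

theorem ofReal_mul_of_tendsto_pos {u v : α → ℝ} {m : ℝ}
    (h : LIntegralDivergesAtFilter (fun x => ENNReal.ofReal (u x)) l μ)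
    (huv : AEMeasurable (fun x => u x * v x) μ) (hv : Tendsto v l (𝓝 m)) (hm : 0 < m) :
    LIntegralDivergesAtFilter (fun x => ENNReal.ofReal (u x * v x)) l μ := by
  refine h.mono_const_mul huv.ennreal_ofReal (ENNReal.ofReal_pos.2 (half_pos hm)).ne' ?_
  filter_upwards [hv.eventually_const_le (half_lt_self hm)] with x hx
  rw [ENNReal.ofReal_mul' ((half_pos hm).le.trans hx), mul_comm]
  gcongr

end Comparison

theorem comp_eval {ι : Type*} [Fintype ι] {X : ι → Type*} [∀ i, MeasurableSpace (X i)]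
    {μ : ∀ i, Measure (X i)} [∀ i, SigmaFinite (μ i)] {l : ∀ i, Filter (X i)} {j : ι}
    {φ : X j → ℝ≥0∞} (h : LIntegralDivergesAtFilter φ (l j) (μ j))
    (hl : ∀ i ≠ j, ∀ V ∈ l i, μ i V ≠ 0) :
    LIntegralDivergesAtFilter (fun x : ∀ i, X i => φ (x j)) (Filter.pi l) (Measure.pi μ) := by
  classical
  intro V hV
  obtain ⟨I, -, t, ht, htV⟩ := Filter.mem_pi.1 hV
  have hbox : univ.pi t ⊆ V := (pi_mono' (fun _ _ => Subset.rfl) (subset_univ I)).trans htV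
  have hfactor : ∏ i ∈ Finset.univ.erase j, (μ i).restrict (t i) univ ≠ 0 := by
    refine Finset.prod_ne_zero_iff.2 fun i hi => ?_
    rw [Measure.restrict_apply_univ]
    exact hl i (Finset.ne_of_mem_erase hi) _ (ht i)
  refine top_le_iff.1 ?_
  calc
    ⊤ = (∏ i ∈ Finset.univ.erase j, (μ i).restrict (t i) univ) * ∫⁻ y in t j, φ y ∂μ j := by
      rw [h _ (ht j), ENNReal.mul_top hfactor]
    _ = ∫⁻ y, φ y ∂(Measure.pi fun i => (μ i).restrict (t i)).map (Function.eval j) := by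
      rw [Measure.pi_map_eval, lintegral_smul_measure, smul_eq_mul]
    _ ≤ ∫⁻ x, φ (x j) ∂Measure.pi fun i => (μ i).restrict (t i) := lintegral_map_le _ _
    _ = ∫⁻ x in univ.pi t, φ (x j) ∂Measure.pi μ := by rw [Measure.restrict_pi_pi]
    _ ≤ ∫⁻ x in V, φ (x j) ∂Measure.pi μ := lintegral_mono_set hbox

end LIntegralDivergesAtFilter

theorem lintegralDivergesAtFilter_rpow_nhdsGT_zero {a : ℝ} (ha : a ≤ -1) :
    LIntegralDivergesAtFilter (fun t : ℝ => ENNReal.ofReal (t ^ a)) (𝓝[>] 0) volume := by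
  intro V hV
  obtain ⟨ε, hε, hεV⟩ := mem_nhdsGT_iff_exists_Ioo_subset.1 hV
  have hnonneg : 0 ≤ᵐ[volume.restrict (Ioo 0 ε)] fun t : ℝ => t ^ a :=
    ae_restrict_of_forall_mem measurableSet_Ioo fun t ht => rpow_nonneg ht.1.le a
  have hnot : ¬IntegrableOn (fun t : ℝ => t ^ a) (Ioo 0 ε) := by
    rw [intervalIntegral.integrableOn_Ioo_rpow_iff hε]
    exact ha.not_gt
  have hIoo : ∫⁻ t in Ioo 0 ε, ENNReal.ofReal (t ^ a) = ⊤ := by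
    contrapose! hnot
    exact (lintegral_ofReal_ne_top_iff_integrable (by fun_prop) hnonneg).1 hnot
  exact top_le_iff.1 (hIoo.ge.trans (lintegral_mono_set hεV))

section ScalePole

variable {ι : Type*} [DecidableEq ι]

/-- The filter on scale vectors `s` along which the pole is detected: `s j` tends to `0` from the
right and every other coordinate tends to `1`. Any positive limit would do in place of `1`. -/
def scalePoleFilter (j : ι) : Filter (ι → ℝ) :=
  Filter.pi (Function.update (fun _ => 𝓝 1) j (𝓝[>] 0))

theorem tendsto_apply_self_scalePoleFilter (j : ι) :
    Tendsto (fun s : ι → ℝ => s j) (scalePoleFilter j) (𝓝[>] 0) := by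
  simpa [scalePoleFilter, Function.eval] using
    tendsto_eval_pi (Function.update (fun _ : ι => 𝓝 (1 : ℝ)) j (𝓝[>] 0)) j

theorem tendsto_apply_of_ne_scalePoleFilter {i j : ι} (hij : i ≠ j) :
    Tendsto (fun s : ι → ℝ => s i) (scalePoleFilter j) (𝓝 1) := by
  simpa [scalePoleFilter, Function.eval, hij] using
    tendsto_eval_pi (Function.update (fun _ : ι => 𝓝 (1 : ℝ)) j (𝓝[>] 0)) i

theorem tendsto_apply_scalePoleFilter (i j : ι) :
    Tendsto (fun s : ι → ℝ => s i) (scalePoleFilter j) (𝓝 (if i = j then 0 else 1)) := by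
  split_ifs with hij
  · exact hij ▸ (tendsto_apply_self_scalePoleFilter j).mono_right nhdsWithin_le_nhds
  · exact tendsto_apply_of_ne_scalePoleFilter hij

theorem setOf_forall_pos_mem_scalePoleFilter [Finite ι] (j : ι) :
    {s : ι → ℝ | ∀ i, 0 < s i} ∈ scalePoleFilter j := by
  refine eventually_all.2 fun i => ?_
  rcases eq_or_ne i j with rfl | hij
  · exact (tendsto_apply_self_scalePoleFilter i).eventually_mem self_mem_nhdsWithin
  · exact (tendsto_apply_of_ne_scalePoleFilter hij).eventually_const_lt one_pos

theorem tendsto_div_apply_scalePoleFilter {b : ι → ℝ} {j : ι} (hbj : b j = 0) (i : ι) :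
    Tendsto (fun s : ι → ℝ => b i / s i) (scalePoleFilter j) (𝓝 (b i)) := by
  rcases eq_or_ne i j with rfl | hij
  · simpa [hbj] using tendsto_const_nhds
  · simpa [Pi.div_def] using
      tendsto_const_nhds.div (tendsto_apply_of_ne_scalePoleFilter hij) one_ne_zero

theorem lintegralDivergesAtFilter_rpow_apply_scalePoleFilter [Fintype ι] {a : ℝ} (ha : a ≤ -1)
    (j : ι) :
    LIntegralDivergesAtFilter (fun s : ι → ℝ => ENNReal.ofReal (s j ^ a)) (scalePoleFilter j)
      volume := by
  refine LIntegralDivergesAtFilter.comp_eval (X := fun _ => ℝ)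
    (φ := fun t => ENNReal.ofReal (t ^ a)) ?_ ?_
  · simpa using lintegralDivergesAtFilter_rpow_nhdsGT_zero ha
  · intro i hij V hV
    rw [Function.update_of_ne hij] at hV
    exact (Measure.measure_pos_of_mem_nhds volume hV).ne'

end ScalePole

section Density

variable {ι : Type*} [Fintype ι]

/-- The exponential factor of the SNG integrand at the scale vector `s`, where `A` stands for the
precision matrix `Ω⁻¹` and `c` for the rate of the gamma distribution of the squared scales. -/
noncomputable def sngExpFactor (A : Matrix ι ι ℝ) (c : ℝ) (b s : ι → ℝ) : ℝ :=
  exp (-(1 / 2) * (∑ i, ∑ k, A i k * (b i / s i) * (b k / s k)) - c * ∑ i, s i ^ 2)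

theorem measurable_sngExpFactor (A : Matrix ι ι ℝ) (c : ℝ) (b : ι → ℝ) :
    Measurable (sngExpFactor A c b) := by
  unfold sngExpFactor
  fun_prop

variable [DecidableEq ι]

theorem exists_pos_tendsto_sngExpFactor (A : Matrix ι ι ℝ) (c : ℝ) {b : ι → ℝ} {j : ι}
    (hbj : b j = 0) :
    ∃ m > 0, Tendsto (sngExpFactor A c b) (scalePoleFilter j) (𝓝 m) := by
  have hquad := tendsto_finsetSum Finset.univ fun i _ => tendsto_finsetSum Finset.univ fun k _ =>
    ((tendsto_div_apply_scalePoleFilter hbj i).const_mul (A i k)).mul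
      (tendsto_div_apply_scalePoleFilter hbj k)
  have hsq := tendsto_finsetSum Finset.univ fun i _ => (tendsto_apply_scalePoleFilter i j).pow 2
  exact ⟨_, exp_pos _, ((hquad.const_mul _).sub (hsq.const_mul c)).rexp⟩

theorem tendsto_prod_erase_rpow_scalePoleFilter (a : ℝ) (j : ι) :
    Tendsto (fun s : ι → ℝ => ∏ i ∈ Finset.univ.erase j, s i ^ a) (scalePoleFilter j) (𝓝 1) := by
  have hfactor : ∀ i ∈ Finset.univ.erase j,
      Tendsto (fun s : ι → ℝ => s i ^ a) (scalePoleFilter j) (𝓝 1) := fun i hi => by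
    simpa using (tendsto_apply_of_ne_scalePoleFilter (Finset.ne_of_mem_erase hi)).rpow_const
      (p := a) (.inl one_ne_zero)
  simpa using tendsto_finsetProd _ hfactor

theorem lintegralDivergesAtFilter_sngIntegrand (A : Matrix ι ι ℝ) {c : ℝ} (hc : c ≤ 1 / 2)
    {b : ι → ℝ} {j : ι} (hbj : b j = 0) :
    LIntegralDivergesAtFilter
      (fun s => ENNReal.ofReal ((∏ i, s i ^ (2 * c - 2)) * sngExpFactor A c b s))
      (scalePoleFilter j) volume := by
  obtain ⟨m, hm, hexp⟩ := exists_pos_tendsto_sngExpFactor A c hbj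
  have hsplit (s : ι → ℝ) : (∏ i, s i ^ (2 * c - 2)) * sngExpFactor A c b s =
      s j ^ (2 * c - 2) *
        ((∏ i ∈ Finset.univ.erase j, s i ^ (2 * c - 2)) * sngExpFactor A c b s) := by
    rw [← Finset.mul_prod_erase _ _ (Finset.mem_univ j), mul_assoc]
  simp only [hsplit]
  refine (lintegralDivergesAtFilter_rpow_apply_scalePoleFilter (by linarith) j)
    |>.ofReal_mul_of_tendsto_pos ?_
      ((tendsto_prod_erase_rpow_scalePoleFilter _ j).mul hexp) (by simpa using hm)
  have hmeas := measurable_sngExpFactor A c b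
  fun_prop

end Density

theorem sng_density_pole_general {ι : Type*} [Fintype ι] (A : Matrix ι ι ℝ) {c : ℝ}
    (hc : c ≤ 1 / 2) {b : ι → ℝ} {j : ι} (hbj : b j = 0) :
    ∫⁻ s in {s : ι → ℝ | ∀ i, 0 < s i}, ENNReal.ofReal ((∏ i, s i ^ (2 * c - 2)) *
      exp (-(1 / 2) * (∑ i, ∑ k, A i k * (b i / s i) * (b k / s k)) - c * ∑ i, s i ^ 2)) = ⊤ := by
  classical
  exact lintegralDivergesAtFilter_sngIntegrand A hc hbj _ (setOf_forall_pos_mem_scalePoleFilter j)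

/-- Proposition: for the SNG prior with `0 < c < 1/2`, if `b j = 0` for some `j`, then the
(unnormalized) marginal prior density integral at `b` equals `+∞`. -/
theorem sng_density_pole (p : ℕ) (hp : 1 ≤ p) (Ω : Matrix (Fin p) (Fin p) ℝ)
    (hΩsymm : Ω.IsSymm) (hΩ : Ω.PosDef) (c : ℝ) (hc0 : 0 < c) (hc : c < 1 / 2)
    (b : Fin p → ℝ) (j : Fin p) (hbj : b j = 0) :
    ∫⁻ s in {s : Fin p → ℝ | ∀ i, 0 < s i}, ENNReal.ofReal ((∏ i, s i ^ (2 * c - 2)) *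
      Real.exp (-(1 / 2) * (∑ i, ∑ k, Ω⁻¹ i k * (b i / s i) * (b k / s k)) -
        c * ∑ i, s i ^ 2)) = ⊤ :=
  sng_density_pole_general Ω⁻¹ hc.le hbj
end

section
/- Let p ≥ 2 and let Ω and Ψ be real symmetric positive definite p×p matrices. Then the integral defining the (unnormalized) marginal prior density of the first coordinate at zero under the structured product normal prior, namely ∫_{ℝ^{p−1}} ∫_{ℝ^p} (∏_{i=1}^{p} 1/|s_i|)·exp( −(1/2)·( Σ_{i,k} (Ω^{−1})_{ik}·(b_i/s_i)·(b_k/s_k) + sᵀ Ψ^{−1} s ) ) ds db_2 … db_p, evaluated at b_1 = 0 (with b = (0, b_2, …, b_p)), equals +∞. (This is Proposition: for the SPN prior, p(β_1 = 0 | Ψ, Ω) = +∞.) -/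
open MeasureTheory Real

/-! If `(z, s)` has density `f`, then `b = s ∘ z` has density
`∫ (∏ i, 1 / |s i|) * f (b / s, s) ds`. When `b j = 0` the `j`-th entry of `b / s` vanishes for
every `s`, so `f (b / s, s)` no longer damps the factor `1 / |s j|` as `s j → 0`: near a point whose
only zero entry is the `j`-th, the remaining factors stay bounded away from `0`, and the integral
diverges like `∫ 1 / |x| dx` at `0`. The joint density is thus infinite on the whole hyperplane
`b j = 0`. -/

theorem setLIntegral_enorm_inv_ball_zero {r : ℝ} (hr : 0 < r) :
    ∫⁻ x in Metric.ball (0 : ℝ) r, ‖x⁻¹‖ₑ = ⊤ := by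
  by_contra hfin
  have hint : IntegrableOn (fun x : ℝ => x⁻¹) (Set.Ioo (-r) r) := by
    rw [Real.ball_eq_Ioo, zero_sub, zero_add] at hfin
    exact ⟨measurable_inv.aestronglyMeasurable, lt_top_iff_ne_top.mpr hfin⟩
  rw [← intervalIntegrable_iff_integrableOn_Ioo_of_le (by linarith), intervalIntegrable_inv_iff,
    Set.uIcc_of_le (by linarith)] at hint
  rcases hint with h | h
  · linarith
  · exact h ⟨by linarith, hr.le⟩

theorem continuousAt_const_div_pi {ι : Type*} {b s₀ : ι → ℝ} (hb : ∀ i, s₀ i = 0 → b i = 0) :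
    ContinuousAt (fun s : ι → ℝ => b / s) s₀ := by
  refine continuousAt_pi.mpr fun i => ?_
  by_cases hi : s₀ i = 0
  · simpa only [Pi.div_apply, hb i hi, zero_div] using continuousAt_const
  · exact continuousAt_const.div (continuousAt_apply i s₀) hi

section Pi

variable {ι : Type*} [Fintype ι]

theorem setLIntegral_pi_comp_eval [DecidableEq ι] {α : ι → Type*} [∀ i, MeasurableSpace (α i)]
    (μ : ∀ i, Measure (α i)) [∀ i, SigmaFinite (μ i)] (t : ∀ i, Set (α i)) (j : ι)
    {φ : α j → ENNReal} (hφ : Measurable φ) :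
    ∫⁻ x in Set.univ.pi t, φ (x j) ∂Measure.pi μ =
      (∏ i ∈ Finset.univ.erase j, μ i (t i)) * ∫⁻ y in t j, φ y ∂μ j := by
  rw [Measure.restrict_pi_pi, ← lintegral_map (g := Function.eval j) hφ (measurable_pi_apply j),
    Measure.pi_map_eval, lintegral_smul_measure, smul_eq_mul]
  simp only [Measure.restrict_apply_univ]

theorem setLIntegral_enorm_inv_eval_ball {s₀ : ι → ℝ} {j : ι} (hj : s₀ j = 0) {r : ℝ}
    (hr : 0 < r) : ∫⁻ s in Metric.ball s₀ r, ‖(s j)⁻¹‖ₑ = ⊤ := by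
  classical
  rw [ball_pi _ hr, volume_pi, setLIntegral_pi_comp_eval _ _ j measurable_inv.enorm, hj,
    setLIntegral_enorm_inv_ball_zero hr, ENNReal.mul_top]
  exact Finset.prod_ne_zero_iff.mpr fun i _ => (Metric.measure_ball_pos volume (s₀ i) hr).ne'

theorem lintegral_enorm_inv_eval_mul_eq_top {s₀ : ι → ℝ} {j : ι} (hj : s₀ j = 0)
    {h : (ι → ℝ) → ENNReal} (hh : LowerSemicontinuousAt h s₀) (hpos : 0 < h s₀) :
    ∫⁻ s, ‖(s j)⁻¹‖ₑ * h s = ⊤ := by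
  obtain ⟨c, hc, hch⟩ := exists_between hpos
  obtain ⟨r, hr, hball⟩ := Metric.eventually_nhds_iff_ball.mp (hh c hch)
  rw [eq_top_iff]
  calc ⊤ = ∫⁻ s in Metric.ball s₀ r, ‖(s j)⁻¹‖ₑ * c := by
        rw [lintegral_mul_const' _ _ hch.ne_top, setLIntegral_enorm_inv_eval_ball hj hr,
          ENNReal.top_mul hc.ne']
    _ ≤ ∫⁻ s in Metric.ball s₀ r, ‖(s j)⁻¹‖ₑ * h s :=
        setLIntegral_mono' measurableSet_ball fun s hs => by gcongr; exact (hball s hs).le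
    _ ≤ ∫⁻ s, ‖(s j)⁻¹‖ₑ * h s := setLIntegral_le_lintegral _ _

/-- The density at `b` of the Hadamard product `s ∘ z` of two random vectors with joint density
`f (z, s)`, by the change of variables `z = b / s`. It is unnormalized when `f` is. -/
noncomputable def hadamardDensity (f : (ι → ℝ) × (ι → ℝ) → ℝ) (b : ι → ℝ) : ENNReal :=
  ∫⁻ s : ι → ℝ, ENNReal.ofReal ((∏ i, 1 / |s i|) * f (b / s, s))

/-- The `j`-th entry of `b / s₀` is `0 / 0 = 0` by Lean's convention, which is also the value of
`b j / s j` for every `s`; hence `(b / s₀, s₀)` is the limit of `(b / s, s)` as `s → s₀`. -/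
theorem hadamardDensity_eq_top {f : (ι → ℝ) × (ι → ℝ) → ℝ} {b s₀ : ι → ℝ} {j : ι} (hb : b j = 0)
    (hs₀ : ∀ i, s₀ i = 0 ↔ i = j) (hf : ContinuousAt f (b / s₀, s₀))
    (hpos : 0 < f (b / s₀, s₀)) : hadamardDensity f b = ⊤ := by
  classical
  set g : (ι → ℝ) → ℝ := fun s => (∏ i ∈ Finset.univ.erase j, 1 / |s i|) * f (b / s, s)
  have hne : ∀ i ∈ Finset.univ.erase j, |s₀ i| ≠ 0 := fun i hi =>
    abs_ne_zero.mpr ((hs₀ i).not.mpr (Finset.ne_of_mem_erase hi))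
  have hdiv : ContinuousAt (fun s : ι → ℝ => b / s) s₀ :=
    continuousAt_const_div_pi fun i hi => (hs₀ i).mp hi ▸ hb
  have hprod : ContinuousAt (fun s : ι → ℝ => ∏ i ∈ Finset.univ.erase j, 1 / |s i|) s₀ :=
    tendsto_finsetProd _ fun i hi =>
      continuousAt_const.div (continuousAt_apply i s₀).abs (hne i hi)
  have hg : ContinuousAt g s₀ :=
    hprod.mul (ContinuousAt.comp (f := fun s => (b / s, s)) hf (hdiv.prodMk continuousAt_id))
  have hg_pos : 0 < g s₀ :=
    mul_pos (Finset.prod_pos fun i hi => one_div_pos.mpr ((abs_nonneg _).lt_of_ne' (hne i hi))) hpos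
  have hsplit : ∀ s : ι → ℝ, ENNReal.ofReal ((∏ i, 1 / |s i|) * f (b / s, s)) =
      ‖(s j)⁻¹‖ₑ * ENNReal.ofReal (g s) := fun s => by
    rw [← Finset.mul_prod_erase _ _ (Finset.mem_univ j), mul_assoc,
      ENNReal.ofReal_mul (by positivity), one_div, ← abs_inv, ← Real.enorm_eq_ofReal_abs]
  simp only [hadamardDensity, hsplit]
  exact lintegral_enorm_inv_eval_mul_eq_top ((hs₀ j).mpr rfl)
    (ENNReal.continuous_ofReal.continuousAt.comp hg).lowerSemicontinuousAt
    (ENNReal.ofReal_pos.mpr hg_pos)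

/-- The unnormalized density at `(z, s)` of a pair of independent centered Gaussian vectors with
precision (inverse covariance) matrices `A` and `B`. -/
noncomputable def gaussianPairDensity (A B : Matrix ι ι ℝ) (x : (ι → ℝ) × (ι → ℝ)) : ℝ :=
  exp (-(1 / 2) * ((∑ i, ∑ k, A i k * x.1 i * x.1 k) + ∑ i, ∑ k, x.2 i * B i k * x.2 k))

theorem continuous_gaussianPairDensity (A B : Matrix ι ι ℝ) :
    Continuous (gaussianPairDensity A B) := by
  unfold gaussianPairDensity
  fun_prop

end Pi

theorem spn_first_coord_pole_general {n : ℕ}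
    {f : (Fin (n + 1) → ℝ) × (Fin (n + 1) → ℝ) → ℝ} (hf : Continuous f) (hpos : ∀ x, 0 < f x)
    (j : Fin (n + 1)) :
    ∫⁻ b' : Fin n → ℝ, hadamardDensity f (j.insertNth 0 b') = ⊤ := by
  have hs₀ : ∀ i, Function.update (1 : Fin (n + 1) → ℝ) j 0 i = 0 ↔ i = j := fun i => by
    simp [Function.update_apply]
  have hjoint : ∀ b' : Fin n → ℝ, hadamardDensity f (j.insertNth 0 b') = ⊤ := fun b' =>
    hadamardDensity_eq_top (Fin.insertNth_apply_same (α := fun _ => ℝ) j 0 b') hs₀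
      hf.continuousAt (hpos _)
  simp only [hjoint, lintegral_const]
  exact ENNReal.top_mul (NeZero.ne _)

/-- Proposition: for the SPN prior (dimension `p = n + 1 ≥ 2`), the (unnormalized) marginal
prior density of the first coordinate at `0`, obtained by integrating the joint density over
the remaining coordinates `b₂, …, b_p`, equals `+∞`. -/
theorem spn_first_coord_pole (n : ℕ) (hn : 1 ≤ n)
    (Ω Ψ : Matrix (Fin (n + 1)) (Fin (n + 1)) ℝ)
    (hΩsymm : Ω.IsSymm) (hΩ : Ω.PosDef) (hΨsymm : Ψ.IsSymm) (hΨ : Ψ.PosDef) :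
    ∫⁻ b' : Fin n → ℝ, ∫⁻ s : Fin (n + 1) → ℝ, ENNReal.ofReal ((∏ i, 1 / |s i|) *
      Real.exp (-(1 / 2) *
        ((∑ i, ∑ k, Ω⁻¹ i k * ((Fin.cons 0 b' : Fin (n + 1) → ℝ) i / s i) *
            ((Fin.cons 0 b' : Fin (n + 1) → ℝ) k / s k)) +
          ∑ i, ∑ k, s i * Ψ⁻¹ i k * s k))) = ⊤ := by
  simpa only [Fin.insertNth_zero', hadamardDensity, gaussianPairDensity, Pi.div_apply] using
    spn_first_coord_pole_general (continuous_gaussianPairDensity Ω⁻¹ Ψ⁻¹) (fun _ => exp_pos _) 0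
end

section
/- Let p ≥ 2, let Ω be a real symmetric positive definite p×p matrix, and let 0 < c < 1/2. Then the integral defining the (unnormalized) marginal prior density of the first coordinate at zero under the structured normal-gamma prior, namely ∫_{ℝ^{p−1}} ∫_{(0,∞)^p} (∏_{i=1}^{p} s_i^{2c − 2})·exp( −(1/2)·Σ_{i,k} (Ω^{−1})_{ik}·(b_i/s_i)·(b_k/s_k) − c·Σ_{i=1}^{p} s_i² ) ds db_2 … db_p, evaluated at b_1 = 0 (with b = (0, b_2, …, b_p)), equals +∞. (This is Proposition: for the SNG prior with c < 1/2, p(β_1 = 0 | c, Ω) = +∞.) -/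
open MeasureTheory Real

/-!
If `b j = 0`, the ratio `b j / s j` vanishes whatever `s j` is, so the quadratic form in `b / s`
does not involve `s j`. Along the `j`-th axis the integrand is therefore `s j ^ (2 * c - 2)` times
a function that is continuous and positive at `0`, and `2 * c - 2 ≤ -1` makes this non-integrable
at `0`. Hence already the joint density is infinite on the whole hyperplane `b j = 0`.
-/

open Function Set
open scoped ENNReal

theorem setLIntegral_Ioo_rpow_eq_top {a δ : ℝ} (ha : a ≤ -1) (hδ : 0 < δ) :
    ∫⁻ x in Ioo 0 δ, ENNReal.ofReal (x ^ a) = ∞ := by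
  by_contra hfin
  have hint : IntegrableOn (fun x : ℝ ↦ x ^ a) (Ioo 0 δ) := by
    refine ⟨by fun_prop, ?_⟩
    rw [hasFiniteIntegral_iff_ofReal]
    · exact lt_top_iff_ne_top.mpr hfin
    · exact ae_restrict_of_forall_mem measurableSet_Ioo fun x hx ↦ rpow_nonneg hx.1.le a
  exact ha.not_gt ((intervalIntegral.integrableOn_Ioo_rpow_iff hδ).mp hint)

theorem setLIntegral_Ioi_rpow_mul_eq_top {a : ℝ} (ha : a ≤ -1) {g : ℝ → ℝ}
    (hg : ContinuousAt g 0) (hg0 : 0 < g 0) :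
    ∫⁻ x in Ioi 0, ENNReal.ofReal (x ^ a * g x) = ∞ := by
  obtain ⟨m, hm, hmg⟩ := exists_between hg0
  obtain ⟨δ, hδ, hgδ⟩ : ∃ δ > 0, ∀ x ∈ Ioo 0 δ, m < g x :=
    mem_nhdsGT_iff_exists_Ioo_subset.mp
      (nhdsWithin_le_nhds (hg.eventually (lt_mem_nhds hmg)))
  refine top_unique ?_
  calc
    ∞ = ∫⁻ x in Ioo 0 δ, ENNReal.ofReal (x ^ a) * ENNReal.ofReal m := by
      rw [lintegral_mul_const _ (by fun_prop), setLIntegral_Ioo_rpow_eq_top ha hδ,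
        ENNReal.top_mul (ENNReal.ofReal_pos.mpr hm).ne']
    _ ≤ ∫⁻ x in Ioo 0 δ, ENNReal.ofReal (x ^ a * g x) := by
      refine setLIntegral_mono' measurableSet_Ioo fun x hx ↦ ?_
      have hxa : 0 ≤ x ^ a := rpow_nonneg hx.1.le a
      rw [← ENNReal.ofReal_mul hxa]
      gcongr
      exact (hgδ x hx).le
    _ ≤ ∫⁻ x in Ioi 0, ENNReal.ofReal (x ^ a * g x) := lintegral_mono_set Ioo_subset_Ioi_self

section Pi

variable {ι : Type*} [Fintype ι]

theorem setLIntegral_univ_pi_eq_top [DecidableEq ι] {X : ι → Type*} [∀ i, MeasurableSpace (X i)]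
    {μ : ∀ i, Measure (X i)} [∀ i, SigmaFinite (μ i)] {s : ∀ i, Set (X i)}
    (hs : ∀ i, MeasurableSet (s i)) (hμs : ∀ i, μ i (s i) ≠ 0) {f : (∀ i, X i) → ℝ≥0∞}
    (hf : Measurable f) (j : ι)
    (hfj : ∀ x ∈ univ.pi s, ∫⁻ t in s j, f (update x j t) ∂μ j = ∞) :
    ∫⁻ x in univ.pi s, f x ∂Measure.pi μ = ∞ := by
  choose x₀ hx₀ using fun i ↦ nonempty_of_measure_ne_zero (hμs i)
  have hfiber : EqOn
      (fun y ↦ ∫⁻ t in s j, f (update (updateFinset x₀ (Finset.univ.erase j) y) j t) ∂μ j)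
      (fun _ ↦ ∞) (univ.pi fun i : Finset.univ.erase j ↦ s i) := by
    refine fun y hy ↦ hfj _ fun i _ ↦ ?_
    by_cases hi : i ∈ Finset.univ.erase j
    · simpa only [updateFinset, dif_pos hi] using hy ⟨i, hi⟩ (mem_univ _)
    · simpa only [updateFinset, dif_neg hi] using hx₀ i
  rw [Measure.restrict_pi_pi, lintegral_eq_lmarginal_univ x₀,
    lmarginal_erase' _ hf (Finset.mem_univ j), lmarginal, ← Measure.restrict_pi_pi,
    setLIntegral_congr_fun (.univ_pi fun _ ↦ hs _) hfiber, setLIntegral_const, Measure.pi_pi]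
  exact ENNReal.top_mul (Finset.prod_ne_zero_iff.mpr fun i _ ↦ hμs i)

/-- The integrand of the structured normal-gamma prior at `b` and scales `s`, up to normalization.
It is parametrized by the precision matrix `Q`, which is `Ω⁻¹` in the paper's notation. -/
noncomputable def sngIntegrand (Q : Matrix ι ι ℝ) (c : ℝ) (b s : ι → ℝ) : ℝ :=
  (∏ i, s i ^ (2 * c - 2)) *
    exp (-(1 / 2) * (∑ i, ∑ k, Q i k * (b i / s i) * (b k / s k)) - c * ∑ i, s i ^ 2)

/-- The joint marginal density of the structured normal-gamma prior at `b`, up to normalization: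
the integral of `sngIntegrand` over positive scales, with values in `ℝ≥0∞` because it can
diverge. -/
noncomputable def sngDensity (Q : Matrix ι ι ℝ) (c : ℝ) (b : ι → ℝ) : ℝ≥0∞ :=
  ∫⁻ s in {s : ι → ℝ | ∀ i, 0 < s i}, ENNReal.ofReal (sngIntegrand Q c b s)

variable {Q : Matrix ι ι ℝ} {c : ℝ} {b : ι → ℝ} {j : ι}

theorem measurable_sngIntegrand : Measurable (sngIntegrand Q c b) := by
  unfold sngIntegrand
  fun_prop

theorem sngIntegrand_update [DecidableEq ι] (hb : b j = 0) (s : ι → ℝ) (t : ℝ) :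
    sngIntegrand Q c b (update s j t) =
      t ^ (2 * c - 2) * ((∏ i ∈ Finset.univ.erase j, s i ^ (2 * c - 2)) *
        exp (-(1 / 2) * (∑ i, ∑ k, Q i k * (b i / s i) * (b k / s k)) -
          c * ∑ i, update s j t i ^ 2)) := by
  have hratio (i : ι) : b i / update s j t i = b i / s i := by
    obtain rfl | hij := eq_or_ne i j
    · simp only [hb, zero_div]
    · rw [update_of_ne hij]
  have hprod : ∏ i, update s j t i ^ (2 * c - 2) =
      t ^ (2 * c - 2) * ∏ i ∈ Finset.univ.erase j, s i ^ (2 * c - 2) := by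
    rw [← Finset.mul_prod_erase _ _ (Finset.mem_univ j), update_self]
    congr 1
    exact Finset.prod_congr rfl fun i hi ↦ by rw [update_of_ne (Finset.ne_of_mem_erase hi)]
  simp only [sngIntegrand, hratio, hprod, mul_assoc]

theorem setLIntegral_sngIntegrand_update_eq_top [DecidableEq ι] (hc : c ≤ 1 / 2) (hb : b j = 0)
    {s : ι → ℝ} (hs : ∀ i, i ≠ j → 0 < s i) :
    ∫⁻ t in Ioi 0, ENNReal.ofReal (sngIntegrand Q c b (update s j t)) = ∞ := by
  simp only [sngIntegrand_update hb]
  refine setLIntegral_Ioi_rpow_mul_eq_top (by linarith) (Continuous.continuousAt (by fun_prop)) ?_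
  exact mul_pos
    (Finset.prod_pos fun i hi ↦ rpow_pos_of_pos (hs i (Finset.ne_of_mem_erase hi)) _) (exp_pos _)

theorem sngDensity_eq_top (hc : c ≤ 1 / 2) (hb : b j = 0) : sngDensity Q c b = ∞ := by
  classical
  have horthant : {s : ι → ℝ | ∀ i, 0 < s i} = univ.pi fun _ ↦ Ioi 0 := by
    ext s
    simp only [mem_ofPred_eq, mem_univ_pi, mem_Ioi]
  rw [sngDensity, horthant]
  refine setLIntegral_univ_pi_eq_top (fun _ ↦ measurableSet_Ioi)
    (fun _ ↦ (isOpen_Ioi.measure_pos volume nonempty_Ioi).ne')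
    measurable_sngIntegrand.ennreal_ofReal j fun s hs ↦ ?_
  exact setLIntegral_sngIntegrand_update_eq_top hc hb fun i _ ↦ hs i (mem_univ i)

end Pi

theorem sng_first_coord_pole_general (n : ℕ) (Q : Matrix (Fin (n + 1)) (Fin (n + 1)) ℝ) {c : ℝ}
    (hc : c ≤ 1 / 2) : ∫⁻ b' : Fin n → ℝ, sngDensity Q c (Fin.cons 0 b') = ∞ := by
  have hpole (b' : Fin n → ℝ) : sngDensity Q c (Fin.cons 0 b') = ∞ :=
    sngDensity_eq_top (j := 0) hc rfl
  simp only [hpole, lintegral_const]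
  exact ENNReal.top_mul (isOpen_univ.measure_pos volume univ_nonempty).ne'

/-- Proposition: for the SNG prior with `0 < c < 1/2` (dimension `p = n + 1 ≥ 2`), the
(unnormalized) marginal prior density of the first coordinate at `0`, obtained by integrating
the joint density over the remaining coordinates `b₂, …, b_p`, equals `+∞`. -/
theorem sng_first_coord_pole (n : ℕ) (hn : 1 ≤ n)
    (Ω : Matrix (Fin (n + 1)) (Fin (n + 1)) ℝ)
    (hΩsymm : Ω.IsSymm) (hΩ : Ω.PosDef) (c : ℝ) (hc0 : 0 < c) (hc : c < 1 / 2) :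
    ∫⁻ b' : Fin n → ℝ, ∫⁻ s in {s : Fin (n + 1) → ℝ | ∀ i, 0 < s i},
      ENNReal.ofReal ((∏ i, s i ^ (2 * c - 2)) *
        Real.exp (-(1 / 2) *
          (∑ i, ∑ k, Ω⁻¹ i k * ((Fin.cons 0 b' : Fin (n + 1) → ℝ) i / s i) *
            ((Fin.cons 0 b' : Fin (n + 1) → ℝ) k / s k)) -
          c * ∑ i, s i ^ 2)) = ⊤ :=
  sng_first_coord_pole_general n Ω⁻¹ hc.le
end

section
/- Let p ≥ 2 and let f, g : ℝ^p → [0, ∞) be Lebesgue-measurable. Define the first-coordinate marginals f₁(x) = ∫_{ℝ^{p−1}} f(x, y) dy and g₁(x) = ∫_{ℝ^{p−1}} g(x, y) dy. Then for every b₁ ∈ ℝ, the iterated integral ∫_{ℝ^{p−1}} ∫_{ℝ^p} g(s) · f(b₁/s₁, b₂/s₂, …, b_p/s_p) · (∏_{j=1}^{p} 1/|s_j|) ds db₂ … db_p equals ∫_{ℝ} g₁(s₁) · f₁(b₁/s₁) · (1/|s₁|) ds₁ (as an identity in [0, +∞]). In particular, if g is the density of the scale vector s and f the density of z, the marginal density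 of the first coordinate of β = s ∘ z depends only on the univariate marginals of s₁ and z₁, so introducing correlation among the remaining coordinates does not alter the marginal prior distribution of β₁. -/
open MeasureTheory Real
open scoped ENNReal

/-!
By Tonelli, integrate over `b₂, …, b_p` first, for a fixed scale vector `s` without zero
coordinates. The substitution `b_j = s_j t_j` absorbs the factors `1 / |s_j|` with `j ≥ 2` and
leaves `f₁ (b₁ / s₁) / |s₁|`, a function of `s₁` alone, so only the first marginal of the law of
`s` is seen by the remaining integral.
-/

theorem measurable_finCons {n : ℕ} {β : Type*} [MeasurableSpace β] {α : Fin (n + 1) → Type*}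
    [∀ i, MeasurableSpace (α i)] {x : β → α 0} {y : β → ∀ j : Fin n, α j.succ}
    (hx : Measurable x) (hy : Measurable y) :
    Measurable fun b => (Fin.cons (x b) (y b) : ∀ i, α i) :=
  measurable_pi_iff.2 fun i => Fin.cases hx (fun j => (measurable_pi_apply j).comp hy) i

section Pi

variable {n : ℕ} {α : Fin (n + 1) → Type*} [∀ i, MeasurableSpace (α i)]
  (μ : ∀ i, Measure (α i)) [∀ i, SigmaFinite (μ i)]

theorem measurePreserving_finCons :
    MeasurePreserving (fun p => (Fin.cons p.1 p.2 : ∀ i, α i))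
      ((μ 0).prod (Measure.pi fun j : Fin n => μ j.succ)) (Measure.pi μ) := by
  convert! (measurePreserving_piFinSuccAbove μ 0).symm using 1
  ext p i
  cases i using Fin.cases <;> rfl

theorem lintegral_pi_eq_lintegral_lintegral_finCons {F : (∀ i, α i) → ℝ≥0∞} (hF : Measurable F) :
    ∫⁻ s, F s ∂Measure.pi μ =
      ∫⁻ x, ∫⁻ y, F (Fin.cons x y) ∂Measure.pi (fun j : Fin n => μ j.succ) ∂μ 0 := by
  have hcons := measurePreserving_finCons μ
  rw [← hcons.lintegral_comp hF]
  exact lintegral_prod _ (hF.comp hcons.measurable).aemeasurable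

theorem lintegral_map_apply_zero_withDensity_pi {G : (∀ i, α i) → ℝ≥0∞} (hG : Measurable G)
    {φ : α 0 → ℝ≥0∞} (hφ : Measurable φ) :
    ∫⁻ x, φ x ∂((Measure.pi μ).withDensity G).map (fun s => s 0) =
      ∫⁻ x, (∫⁻ y, G (Fin.cons x y) ∂Measure.pi fun j : Fin n => μ j.succ) * φ x ∂μ 0 := by
  have hφ₀ : Measurable fun s : ∀ i, α i => φ (s 0) := hφ.comp (measurable_pi_apply 0)
  rw [lintegral_map hφ (measurable_pi_apply 0), lintegral_withDensity_eq_lintegral_mul _ hG hφ₀,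
    lintegral_pi_eq_lintegral_lintegral_finCons μ (hG.mul hφ₀)]
  exact lintegral_congr fun x => lintegral_mul_const (φ x)
    (hG.comp (measurable_finCons measurable_const measurable_id))

end Pi

theorem ae_pi_forall_apply_ne {ι : Type*} [Fintype ι] {α : ι → Type*}
    [∀ i, MeasurableSpace (α i)] (μ : ∀ i, Measure (α i)) [∀ i, SigmaFinite (μ i)]
    [∀ i, NullSingletonClass (μ i)] (a : ∀ i, α i) :
    ∀ᵐ s ∂Measure.pi μ, ∀ i, s i ≠ a i :=
  ae_all_iff.2 fun i =>
    (Measure.quasiMeasurePreserving_eval μ i).ae ((μ i).ae_ne (a i))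

theorem lintegral_comp_div_mul_prod_one_div_abs {ι : Type*} [Fintype ι] {t : ι → ℝ}
    (ht : ∀ j, t j ≠ 0) {F : (ι → ℝ) → ℝ≥0∞} (hF : Measurable F) :
    (∫⁻ b, F (b / t)) * ENNReal.ofReal (∏ j, 1 / |t j|) = ∫⁻ y, F y := by
  classical
  have hdet : (Matrix.diagonal fun j => 1 / t j).det ≠ 0 := by
    rw [Matrix.det_diagonal]
    exact Finset.prod_ne_zero_iff.2 fun j _ => one_div_ne_zero (ht j)
  have hdiag (b : ι → ℝ) : Matrix.toLin' (Matrix.diagonal fun j => 1 / t j) b = b / t := by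
    ext j
    rw [Matrix.toLin'_apply, Matrix.mulVec_diagonal, Pi.div_apply, one_div_mul_eq_div]
  conv_rhs => rw [← Real.smul_map_diagonal_volume_pi hdet]
  rw [lintegral_smul_measure,
    lintegral_map hF (LinearMap.continuous_of_finiteDimensional _).measurable, Matrix.det_diagonal,
    Finset.abs_prod, smul_eq_mul, mul_comm]
  simp only [hdiag, abs_div, abs_one]

theorem finCons_div {n : ℕ} {α : Type*} [Div α] (x : α) (y : Fin n → α) (s : Fin (n + 1) → α) :
    (Fin.cons x y : Fin (n + 1) → α) / s = Fin.cons (x / s 0) (y / Fin.tail s) := by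
  ext j
  cases j using Fin.cases <;> rfl

theorem lintegral_ofReal_mul_eq_lintegral_withDensity {α : Type*} [MeasurableSpace α]
    (μ : Measure α) {g : α → ℝ} (hg : Measurable g) (hg0 : ∀ a, 0 ≤ g a) (h : α → ℝ) :
    ∫⁻ a, ENNReal.ofReal (g a * h a) ∂μ =
      ∫⁻ a, ENNReal.ofReal (h a) ∂μ.withDensity fun a => ENNReal.ofReal (g a) := by
  rw [lintegral_withDensity_eq_lintegral_mul_non_measurable _ hg.ennreal_ofReal
    (ae_of_all _ fun _ => ENNReal.ofReal_lt_top)]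
  exact lintegral_congr fun a => ENNReal.ofReal_mul (hg0 a)

section ProductDensity

variable {n : ℕ} {f : (Fin (n + 1) → ℝ) → ℝ≥0∞}

theorem lintegral_comp_finCons_div_mul_prod_one_div_abs (hf : Measurable f)
    {s : Fin (n + 1) → ℝ} (hs : ∀ j, s j ≠ 0) (b₁ : ℝ) :
    (∫⁻ b' : Fin n → ℝ, f (Fin.cons b₁ b' / s)) * ENNReal.ofReal (∏ j, 1 / |s j|) =
      (∫⁻ y : Fin n → ℝ, f (Fin.cons (b₁ / s 0) y)) * ENNReal.ofReal (1 / |s 0|) := by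
  have hslice : Measurable fun y : Fin n → ℝ => f (Fin.cons (b₁ / s 0) y) :=
    hf.comp (measurable_finCons measurable_const measurable_id)
  simp only [finCons_div]
  rw [Fin.prod_univ_succ, mul_comm (1 / |s 0|), ENNReal.ofReal_mul (by positivity), ← mul_assoc,
    ← lintegral_comp_div_mul_prod_one_div_abs (t := Fin.tail s) (fun j => hs j.succ) hslice]
  rfl

theorem measurable_lintegral_finCons_div_mul (hf : Measurable f) (b₁ : ℝ) :
    Measurable fun x =>
      (∫⁻ y : Fin n → ℝ, f (Fin.cons (b₁ / x) y)) * ENNReal.ofReal (1 / |x|) := by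
  have hmarginal : Measurable fun x => ∫⁻ y : Fin n → ℝ, f (Fin.cons x y) :=
    (hf.comp (measurable_finCons measurable_fst measurable_snd)).lintegral_prod_right'
  exact (hmarginal.comp (by fun_prop : Measurable fun x => b₁ / x)).mul (by fun_prop)

/-- Here `μ` is the law of the scale vector `s`, which need not have a density. -/
theorem shp_univariate_marginal_general {μ : Measure (Fin (n + 1) → ℝ)} [SFinite μ]
    (hμ : ∀ᵐ s ∂μ, ∀ j, s j ≠ 0) (hf : Measurable f) (b₁ : ℝ) :
    ∫⁻ b' : Fin n → ℝ, ∫⁻ s, f (Fin.cons b₁ b' / s) * ENNReal.ofReal (∏ j, 1 / |s j|) ∂μ =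
      ∫⁻ x, (∫⁻ y : Fin n → ℝ, f (Fin.cons (b₁ / x) y)) * ENNReal.ofReal (1 / |x|)
        ∂μ.map (fun s => s 0) := by
  have hquot : Measurable fun q : (Fin n → ℝ) × (Fin (n + 1) → ℝ) =>
      f (Fin.cons b₁ q.1 / q.2) :=
    hf.comp ((measurable_finCons measurable_const measurable_fst).div measurable_snd)
  rw [lintegral_lintegral_swap (hquot.mul (by fun_prop)).aemeasurable,
    lintegral_map (measurable_lintegral_finCons_div_mul hf b₁) (measurable_pi_apply 0)]
  refine lintegral_congr_ae (hμ.mono fun s hs => ?_)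
  simp only [lintegral_mul_const' _ _ ENNReal.ofReal_ne_top]
  exact lintegral_comp_finCons_div_mul_prod_one_div_abs hf hs b₁

end ProductDensity

/-- The marginal density of the first coordinate of `β = s ∘ z` depends only on the
univariate marginals of `s₁` and `z₁`: for nonnegative measurable densities `f` (of `z`) and
`g` (of `s`) on `ℝ^p` with `p = n + 1 ≥ 2`, and first-coordinate marginals `f₁`, `g₁`,
the iterated integral defining the marginal density of `β₁` at `b₁` collapses to a
one-dimensional integral involving only `f₁` and `g₁`. -/
theorem shp_univariate_marginal (n : ℕ) (hn : 1 ≤ n)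
    (f g : (Fin (n + 1) → ℝ) → ℝ)
    (hf : Measurable f) (hg : Measurable g)
    (hf0 : ∀ x, 0 ≤ f x) (hg0 : ∀ x, 0 ≤ g x)
    (f₁ g₁ : ℝ → ℝ≥0∞)
    (hf₁ : ∀ x : ℝ, f₁ x = ∫⁻ y : Fin n → ℝ, ENNReal.ofReal (f (Fin.cons x y)))
    (hg₁ : ∀ x : ℝ, g₁ x = ∫⁻ y : Fin n → ℝ, ENNReal.ofReal (g (Fin.cons x y)))
    (b₁ : ℝ) :
    ∫⁻ b' : Fin n → ℝ, ∫⁻ s : Fin (n + 1) → ℝ, ENNReal.ofReal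
        (g s * f (fun j => (Fin.cons b₁ b' : Fin (n + 1) → ℝ) j / s j) * ∏ j, 1 / |s j|) =
    ∫⁻ s₁ : ℝ, g₁ s₁ * f₁ (b₁ / s₁) * ENNReal.ofReal (1 / |s₁|) := by
  have hs : ∀ᵐ s ∂volume.withDensity fun s => ENNReal.ofReal (g s), ∀ j, s j ≠ 0 :=
    (withDensity_absolutelyContinuous _ _).ae_le (ae_pi_forall_apply_ne (fun _ => volume) 0)
  simp only [hf₁, hg₁, mul_assoc, ENNReal.ofReal_mul (hf0 _),
    lintegral_ofReal_mul_eq_lintegral_withDensity volume hg hg0]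
  exact (shp_univariate_marginal_general hs hf.ennreal_ofReal b₁).trans
    (lintegral_map_apply_zero_withDensity_pi (fun _ => volume) hg.ennreal_ofReal
      (measurable_lintegral_finCons_div_mul hf.ennreal_ofReal b₁))
end
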